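/- Assume the dataset D has ℓ¹ diameter at most 1. Then for every z ∈ ℝ^d, the mixup-plus-noise output densities of D and D' = D \ {x₀} satisfy the two-sided pointwise bound exp(−1/(kσ)) · q(z) ≤ p(z) ≤ exp(1/(kσ)) · q(z); in particular, a single draw of the mixup-plus-Laplacian-noise mechanism on a dataset of ℓ¹ diameter at most 1 with mixture width k satisfies a pointwise density-ratio (privacy) bound of exp(1/(kσ)), which is the classical Laplacian-mechanism guarantee exp(1/σ) improved by a factor of k in the exponent. -/

import Mathlib

open Finset

/-- The d-dimensional isotropic Laplacian density with scale σ. -/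
noncomputable def laplacianDensity (d : ℕ) (σ : ℝ) (η : Fin d → ℝ) : ℝ :=
  ((2 * σ) ^ d)⁻¹ * Real.exp (-(∑ i, |η i|) / σ)

/-- The mixup-plus-noise output density of a finite dataset `P`. -/
noncomputable def mixupDensity (d : ℕ) (σ : ℝ) (k : ℕ) (P : Finset (Fin d → ℝ))
    (z : Fin d → ℝ) : ℝ :=
  ((P.card.choose k : ℝ))⁻¹ *
    ∑ S ∈ P.powersetCard k, laplacianDensity d σ (z - (k : ℝ)⁻¹ • ∑ x ∈ S, x)

lemma mixup_double_count {α : Type*} [DecidableEq α] (P : Finset α) (j : ℕ) (f : Finset α → ℝ) :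
    ∑ T ∈ P.powersetCard j, ∑ y ∈ P \ T, f (insert y T)
      = ((j : ℝ) + 1) * ∑ S ∈ P.powersetCard (j + 1), f S := by
  have h : ((j : ℝ) + 1) * ∑ S ∈ P.powersetCard (j + 1), f S
      = ∑ S ∈ P.powersetCard (j + 1), ∑ _y ∈ S, f S := by
    rw [Finset.mul_sum]
    refine Finset.sum_congr rfl fun S hS => ?_
    rw [Finset.sum_const, (Finset.mem_powersetCard.1 hS).2]
    simp
  rw [h, Finset.sum_sigma', Finset.sum_sigma']
  refine Finset.sum_bij' (fun a _ => ⟨insert a.2 a.1, a.2⟩) (fun a _ => ⟨a.1.erase a.2, a.2⟩)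
    ?_ ?_ ?_ ?_ ?_
  · rintro ⟨T, y⟩ h
    simp only [Finset.mem_sigma, Finset.mem_powersetCard, Finset.mem_sdiff] at h ⊢
    refine ⟨⟨Finset.insert_subset h.2.1 h.1.1, ?_⟩, Finset.mem_insert_self _ _⟩
    rw [Finset.card_insert_of_notMem h.2.2, h.1.2]
  · rintro ⟨S, y⟩ h
    simp only [Finset.mem_sigma, Finset.mem_powersetCard, Finset.mem_sdiff] at h ⊢
    refine ⟨⟨(Finset.erase_subset _ _).trans h.1.1, ?_⟩, h.1.1 h.2, Finset.notMem_erase _ _⟩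
    rw [Finset.card_erase_of_mem h.2, h.1.2]
    rfl
  · rintro ⟨T, y⟩ h
    simp only [Finset.mem_sigma, Finset.mem_sdiff] at h
    simp [Finset.erase_insert h.2.2]
  · rintro ⟨S, y⟩ h
    simp only [Finset.mem_sigma] at h
    simp [Finset.insert_erase h.2]
  · rintro ⟨T, y⟩ h
    rfl

lemma laplacian_swap (d : ℕ) (σ : ℝ) (hσ : 0 < σ) (k : ℕ) (hk : 1 ≤ k)
    (x y t z : Fin d → ℝ) (h : ∑ i, |x i - y i| ≤ 1) :
    laplacianDensity d σ (z - (k : ℝ)⁻¹ • (x + t))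
      ≤ Real.exp (1 / (k * σ)) * laplacianDensity d σ (z - (k : ℝ)⁻¹ • (y + t)) := by
  have hk0 : (0 : ℝ) < k := by exact_mod_cast hk
  unfold laplacianDensity
  rw [mul_left_comm, ← Real.exp_add]
  refine mul_le_mul_of_nonneg_left (Real.exp_le_exp.2 ?_) (by positivity)
  have key : ∑ i, |(z - (k : ℝ)⁻¹ • (y + t)) i|
      ≤ ∑ i, |(z - (k : ℝ)⁻¹ • (x + t)) i| + (k : ℝ)⁻¹ * ∑ i, |x i - y i| := by
    rw [Finset.mul_sum, ← Finset.sum_add_distrib]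
    refine Finset.sum_le_sum fun i _ => ?_
    have e : (z - (k : ℝ)⁻¹ • (y + t)) i
        = (z - (k : ℝ)⁻¹ • (x + t)) i + (k : ℝ)⁻¹ * (x i - y i) := by
      simp only [Pi.sub_apply, Pi.smul_apply, Pi.add_apply, smul_eq_mul]; ring
    rw [e]
    refine (abs_add_le _ _).trans ?_
    rw [abs_mul, abs_of_pos (inv_pos.2 hk0)]
  have h2 : (k : ℝ)⁻¹ * ∑ i, |x i - y i| ≤ (k : ℝ)⁻¹ := by
    have := mul_le_mul_of_nonneg_left h (inv_pos.2 hk0).le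
    simpa using this
  have e : 1 / ((k : ℝ) * σ) = (k : ℝ)⁻¹ / σ := by field_simp
  rw [e, ← add_div]
  exact div_le_div_of_nonneg_right (by linarith) hσ.le

/-- If `D` has ℓ¹ diameter at most 1, then for every `z ∈ ℝ^d`,
`exp(−1/(kσ))·q(z) ≤ p(z) ≤ exp(1/(kσ))·q(z)`: a single draw of the
mixup-plus-Laplacian-noise mechanism with mixture width `k` satisfies a pointwise
density-ratio (privacy) bound of `exp(1/(kσ))`, improving the classical Laplacian
guarantee `exp(1/σ)` by a factor of `k` in the exponent. -/
theorem mixup_density_pointwise_privacy_bound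
    (d : ℕ) (hd : 1 ≤ d) (σ : ℝ) (hσ : 0 < σ)
    (D : Finset (Fin d → ℝ)) (n : ℕ) (hn : D.card = n)
    (hdiam : ∀ x ∈ D, ∀ y ∈ D, ∑ i, |x i - y i| ≤ 1)
    (x₀ : Fin d → ℝ) (hx₀ : x₀ ∈ D)
    (k : ℕ) (hk1 : 1 ≤ k) (hkn : k ≤ n - 1)
    (z : Fin d → ℝ) :
    Real.exp (-(1 / (k * σ))) * mixupDensity d σ k (D.erase x₀) z
        ≤ mixupDensity d σ k D z ∧
    mixupDensity d σ k D z
        ≤ Real.exp (1 / (k * σ)) * mixupDensity d σ k (D.erase x₀) z := by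
  have hk0 : (0 : ℝ) < k := by exact_mod_cast hk1
  set E := Real.exp (1 / (k * σ)) with hE
  have hE0 : 0 < E := Real.exp_pos _
  have hE1 : 1 ≤ E := Real.one_le_exp (by positivity)
  have hEi : Real.exp (-(1 / (k * σ))) = E⁻¹ := Real.exp_neg _
  rw [hEi]
  obtain ⟨j, rfl⟩ : ∃ j, k = j + 1 := ⟨k - 1, by omega⟩
  set P := D.erase x₀ with hP
  have hx : x₀ ∉ P := Finset.notMem_erase _ _
  have hDP : D = insert x₀ P := (Finset.insert_erase hx₀).symm
  have hcard : D.card = P.card + 1 := by rw [hDP, Finset.card_insert_of_notMem hx]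
  have hjm : j + 1 ≤ P.card := by omega
  set f : Finset (Fin d → ℝ) → ℝ :=
    fun S => laplacianDensity d σ (z - ((j + 1 : ℕ) : ℝ)⁻¹ • ∑ x ∈ S, x) with hf
  have hf0 : ∀ S, 0 ≤ f S := fun S => by
    simp only [hf, laplacianDensity]; positivity
  have hsum : ∑ S ∈ D.powersetCard (j + 1), f S
      = ∑ S ∈ P.powersetCard (j + 1), f S + ∑ T ∈ P.powersetCard j, f (insert x₀ T) := by
    rw [hDP, Finset.powersetCard_succ_insert hx, Finset.sum_union, Finset.sum_image]
    · intro S hS T hT h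
      have hS' : x₀ ∉ S := fun h => hx ((Finset.mem_powersetCard.1 hS).1 h)
      have hT' : x₀ ∉ T := fun h => hx ((Finset.mem_powersetCard.1 hT).1 h)
      rw [← Finset.erase_insert hS', ← Finset.erase_insert hT']
      exact congrArg (fun U => Finset.erase U x₀) h
    · rw [Finset.disjoint_left]
      intro S hS hS'
      obtain ⟨T, _, rfl⟩ := Finset.mem_image.1 hS'
      exact hx ((Finset.mem_powersetCard.1 hS).1 (Finset.mem_insert_self _ _))
  have hp : mixupDensity d σ (j + 1) D z
      = ((D.card.choose (j + 1) : ℝ))⁻¹ * ∑ S ∈ D.powersetCard (j + 1), f S := rfl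
  have hq : mixupDensity d σ (j + 1) P z
      = ((P.card.choose (j + 1) : ℝ))⁻¹ * ∑ S ∈ P.powersetCard (j + 1), f S := rfl
  have hdc := mixup_double_count P j f
  have hcoef : ∀ T ∈ P.powersetCard j, ((P \ T).card : ℝ) = (P.card : ℝ) - j := by
    intro T hT
    obtain ⟨h1, h2⟩ := Finset.mem_powersetCard.1 hT
    rw [Finset.card_sdiff_of_subset h1, h2, Nat.cast_sub (by omega)]
  have hBr : ((P.card : ℝ) - j) * ∑ T ∈ P.powersetCard j, f (insert x₀ T)
      = ∑ T ∈ P.powersetCard j, ∑ _y ∈ P \ T, f (insert x₀ T) := by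
    rw [Finset.mul_sum]
    refine Finset.sum_congr rfl fun T hT => ?_
    rw [Finset.sum_const, nsmul_eq_mul, hcoef T hT]
  have hswap : ∀ T ∈ P.powersetCard j, ∀ y ∈ P \ T,
      f (insert x₀ T) ≤ E * f (insert y T) ∧ f (insert y T) ≤ E * f (insert x₀ T) := by
    intro T hT y hy
    have hxT : x₀ ∉ T := fun h => hx ((Finset.mem_powersetCard.1 hT).1 h)
    obtain ⟨hyP, hyT⟩ := Finset.mem_sdiff.1 hy
    have hyD : y ∈ D := Finset.mem_of_mem_erase hyP
    simp only [hf]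
    rw [Finset.sum_insert hxT, Finset.sum_insert hyT]
    exact ⟨laplacian_swap d σ hσ (j + 1) hk1 _ _ _ z (hdiam _ hx₀ _ hyD),
      laplacian_swap d σ hσ (j + 1) hk1 _ _ _ z (hdiam _ hyD _ hx₀)⟩
  have hA0 : 0 ≤ ∑ S ∈ P.powersetCard (j + 1), f S := Finset.sum_nonneg fun S _ => hf0 S
  have hU : ((P.card : ℝ) - j) * ∑ T ∈ P.powersetCard j, f (insert x₀ T)
      ≤ E * (((j : ℝ) + 1) * ∑ S ∈ P.powersetCard (j + 1), f S) := by
    rw [hBr, ← hdc, Finset.mul_sum]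
    refine Finset.sum_le_sum fun T hT => ?_
    rw [Finset.mul_sum]
    exact Finset.sum_le_sum fun y hy => (hswap T hT y hy).1
  have hL : ((j : ℝ) + 1) * ∑ S ∈ P.powersetCard (j + 1), f S
      ≤ E * (((P.card : ℝ) - j) * ∑ T ∈ P.powersetCard j, f (insert x₀ T)) := by
    rw [hBr, ← hdc, Finset.mul_sum]
    refine Finset.sum_le_sum fun T hT => ?_
    rw [Finset.mul_sum]
    exact Finset.sum_le_sum fun y hy => (hswap T hT y hy).2
  have hch : (P.card.choose (j + 1) : ℝ) * ((j : ℝ) + 1)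
      = (P.card.choose j : ℝ) * ((P.card : ℝ) - j) := by
    have := Nat.choose_succ_right_eq P.card j
    rw [← Nat.cast_sub (by omega)]
    exact_mod_cast this
  have hc : (0 : ℝ) < P.card.choose (j + 1) := by exact_mod_cast Nat.choose_pos hjm
  have hc' : (0 : ℝ) < P.card.choose j := by exact_mod_cast Nat.choose_pos (by omega)
  have hpas : (D.card.choose (j + 1) : ℝ) = P.card.choose j + P.card.choose (j + 1) := by
    rw [hcard, Nat.choose_succ_succ]; push_cast; rfl
  have hr : (0 : ℝ) < (P.card : ℝ) - j := by
    have : ((j + 1 : ℕ) : ℝ) ≤ P.card := by exact_mod_cast hjm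
    push_cast at this; linarith
  rw [hp, hq, hsum, hpas]
  clear_value E f P
  generalize ∑ S ∈ P.powersetCard (j + 1), f S = A at *
  generalize ∑ T ∈ P.powersetCard j, f (insert x₀ T) = B at *
  generalize (P.card.choose (j + 1) : ℝ) = c at *
  generalize (P.card.choose j : ℝ) = c' at *
  generalize (P.card : ℝ) - j = r at *
  have hU' : c * B ≤ E * (c' * A) := by
    refine le_of_mul_le_mul_left ?_ hr
    calc r * (c * B) = c * (r * B) := by ring
      _ ≤ c * (E * (((j : ℝ) + 1) * A)) := mul_le_mul_of_nonneg_left hU hc.le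
      _ = E * A * (c * ((j : ℝ) + 1)) := by ring
      _ = r * (E * (c' * A)) := by rw [hch]; ring
  have hL' : c' * A ≤ E * (c * B) := by
    refine le_of_mul_le_mul_left ?_ hr
    calc r * (c' * A) = A * (c' * r) := by ring
      _ = c * (((j : ℝ) + 1) * A) := by rw [← hch]; ring
      _ ≤ c * (E * (r * B)) := mul_le_mul_of_nonneg_left hL hc.le
      _ = r * (E * (c * B)) := by ring
  have hAE : c * A ≤ E * (c * A) := le_mul_of_one_le_left (by positivity) hE1
  constructor
  · rw [← mul_assoc, ← mul_inv, inv_mul_le_iff₀ (by positivity), mul_left_comm,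
      le_inv_mul_iff₀ (by positivity)]
    nlinarith
  · rw [inv_mul_le_iff₀ (by positivity)]
    have e : (c' + c) * (E * (c⁻¹ * A)) = c⁻¹ * ((c' + c) * (E * A)) := by ring
    rw [e, le_inv_mul_iff₀ hc]
    nlinarith
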